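/- arXiv:2603.27696 — 4 statements merged into one kernel-verified Lean document; each statement's English description precedes it below -/
import Mathlib

section
/- Let G be a finite simple connected graph with a cut vertex u. Then u does not belong to any inclusion-minimal monitoring edge-geodetic set of G. -/
/-!
An MEG-set is geodetic, so for a vertex `z` separated from `x` by the cut vertex `u` there is a
geodesic through `z` between two members of `S`. This geodesic meets `u` at most once, hence one of
its ends is joined to `z` by a walk avoiding `u`; that end `s` differs from `u` and is itself
separated from `x` by `u`. Every geodesic from `x` to `s` begins with a geodesic from `x` to `u`, so
`x, s` monitors whatever `x, u` monitors. Thus `u` can be replaced in every monitoring pair, and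
`S \ {u}` is still an MEG-set.
-/

open SimpleGraph

variable {V : Type*}

/-- A walk is a shortest path if its length equals the distance between its endpoints. -/
def IsShortest (G : SimpleGraph V) {u v : V} (p : G.Walk u v) : Prop :=
  p.length = G.dist u v

/-- `S` is a geodetic set: every vertex lies on some shortest path between
two distinct vertices of `S`. -/
def IsGeodeticSet (G : SimpleGraph V) (S : Set V) : Prop :=
  ∀ x : V, ∃ u ∈ S, ∃ v ∈ S, u ≠ v ∧ ∃ p : G.Walk u v, IsShortest G p ∧ x ∈ p.support

/-- `S` is an edge-geodetic set: every edge lies on some shortest path between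
two distinct vertices of `S`. -/
def IsEdgeGeodeticSet (G : SimpleGraph V) (S : Set V) : Prop :=
  ∀ e ∈ G.edgeSet, ∃ u ∈ S, ∃ v ∈ S, u ≠ v ∧ ∃ p : G.Walk u v, IsShortest G p ∧ e ∈ p.edges

/-- `S` is a strong edge-geodetic set: one can choose a single shortest path for each
pair of distinct vertices of `S` so that the chosen paths cover every edge. -/
def IsStrongEdgeGeodeticSet (G : SimpleGraph V) (S : Set V) : Prop :=
  ∃ f : ∀ u v : V, u ∈ S → v ∈ S → u ≠ v → G.Walk u v,
    (∀ u v hu hv huv, IsShortest G (f u v hu hv huv)) ∧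
    ∀ e ∈ G.edgeSet, ∃ u v, ∃ hu : u ∈ S, ∃ hv : v ∈ S, ∃ huv : u ≠ v,
      e ∈ (f u v hu hv huv).edges

/-- The pair `u, v` monitors the edge `e`: `u ≠ v` and `e` lies on every shortest
`u`–`v` path. -/
def Monitors (G : SimpleGraph V) (u v : V) (e : Sym2 V) : Prop :=
  u ≠ v ∧ ∀ p : G.Walk u v, IsShortest G p → e ∈ p.edges

/-- `S` is a monitoring edge-geodetic set: every edge is monitored by some pair of
distinct vertices of `S`. -/
def IsMEGSet (G : SimpleGraph V) (S : Set V) : Prop :=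
  ∀ e ∈ G.edgeSet, ∃ u ∈ S, ∃ v ∈ S, Monitors G u v e

/-- The geodetic number `g(G)`. -/
noncomputable def geodeticNumber (G : SimpleGraph V) : ℕ :=
  sInf {n : ℕ | ∃ S : Set V, IsGeodeticSet G S ∧ S.ncard = n}

/-- The edge-geodetic number `eg(G)`. -/
noncomputable def edgeGeodeticNumber (G : SimpleGraph V) : ℕ :=
  sInf {n : ℕ | ∃ S : Set V, IsEdgeGeodeticSet G S ∧ S.ncard = n}

/-- The strong edge-geodetic number `seg(G)`. -/
noncomputable def strongEdgeGeodeticNumber (G : SimpleGraph V) : ℕ :=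
  sInf {n : ℕ | ∃ S : Set V, IsStrongEdgeGeodeticSet G S ∧ S.ncard = n}

/-- The monitoring edge-geodetic number `meg(G)`. -/
noncomputable def monitoringEdgeGeodeticNumber (G : SimpleGraph V) : ℕ :=
  sInf {n : ℕ | ∃ S : Set V, IsMEGSet G S ∧ S.ncard = n}

section

variable {G : SimpleGraph V} {S : Set V} {u x y z : V} {e : Sym2 V}

/-- The vertex `u` separates `x` from `y`: every walk from `x` to `y` visits `u`. For `x` and `y`
different from `u` this says that they lie in different components of `G \ {u}`; phrasing it by
walks avoids the induced subgraph, and makes `u` separate itself from every vertex. -/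
def Separates (G : SimpleGraph V) (u x y : V) : Prop :=
  ∀ p : G.Walk x y, u ∈ p.support

theorem separates_left (G : SimpleGraph V) (u y : V) : Separates G u u y :=
  fun p => p.start_mem_support

theorem Separates.symm (h : Separates G u x y) : Separates G u y x :=
  fun p => by simpa only [Walk.support_reverse, List.mem_reverse] using h p.reverse

theorem separates_self_iff : Separates G u x x ↔ x = u := by
  refine ⟨fun h => ?_, fun h => h ▸ separates_left G x x⟩
  simpa [eq_comm] using h Walk.nil

theorem Separates.or_separates (h : Separates G u x z) (y : V) :
    Separates G u x y ∨ Separates G u y z := by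
  by_contra! hxyz
  simp only [Separates, not_forall] at hxyz
  obtain ⟨⟨p, hp⟩, q, hq⟩ := hxyz
  exact ((p.mem_support_append_iff q).1 (h (p.append q))).elim hp hq

theorem exists_separates_of_not_connected_induce
    (hcut : ¬ (G.induce {v : V | v ≠ u}).Connected) (hx : x ≠ u) :
    ∃ z, z ≠ u ∧ Separates G u x z := by
  by_contra! hjoined
  refine hcut ((connected_iff_exists_forall_reachable _).2 ⟨⟨x, hx⟩, fun ⟨z, hz⟩ => ?_⟩)
  obtain ⟨p, hp⟩ := not_forall.1 (hjoined z hz)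
  exact ⟨p.induce {v : V | v ≠ u} fun v hv hvu => hp (hvu ▸ hv)⟩

theorem not_separates_or_not_separates_of_isPath {a b : V} {p : G.Walk a b} (hp : p.IsPath)
    (hz : z ∈ p.support) (hzu : z ≠ u) : ¬ Separates G u a z ∨ ¬ Separates G u z b := by
  obtain ⟨q, r, -, -, rfl⟩ := hp.mem_support_iff_exists_append.1 hz
  by_contra! hsep
  exact hp.ne_of_mem_support_of_append hzu.symm (hsep.1 q) (hsep.2 r) rfl

theorem IsMEGSet.isGeodeticSet [Nontrivial V] (hconn : G.Preconnected) (hS : IsMEGSet G S) :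
    IsGeodeticSet G S := by
  intro z
  obtain ⟨w, hzw⟩ := hconn.exists_adj_of_nontrivial z
  obtain ⟨a, ha, b, hb, hab, hmon⟩ := hS s(z, w) hzw
  obtain ⟨p, hp⟩ := (hconn a b).exists_walk_length_eq_dist
  exact ⟨a, ha, b, hb, hab, p, hp, p.fst_mem_support_of_mem_edges (hmon p hp)⟩

theorem IsGeodeticSet.exists_mem_not_separates (hS : IsGeodeticSet G S) (hzu : z ≠ u) :
    ∃ s ∈ S, ¬ Separates G u s z := by
  obtain ⟨a, ha, b, hb, -, p, hp, hz⟩ := hS z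
  have hpath : p.IsPath := p.isPath_of_length_eq_dist hp
  rcases not_separates_or_not_separates_of_isPath hpath hz hzu with haz | hzb
  · exact ⟨a, ha, haz⟩
  · exact ⟨b, hb, fun h => hzb h.symm⟩

theorem IsGeodeticSet.exists_mem_separates (hS : IsGeodeticSet G S) (hzu : z ≠ u)
    (hxz : Separates G u x z) : ∃ s ∈ S \ {u}, Separates G u x s := by
  obtain ⟨s, hs, hsz⟩ := hS.exists_mem_not_separates hzu
  have hsu : s ≠ u := by
    rintro rfl
    exact hsz (separates_left G s z)
  exact ⟨s, ⟨hs, hsu⟩, (hxz.or_separates s).resolve_right hsz⟩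

theorem Monitors.symm (h : Monitors G x y e) : Monitors G y x e := by
  refine ⟨h.1.symm, fun p hp => ?_⟩
  have hrev : IsShortest G p.reverse := by
    rw [IsShortest, Walk.length_reverse, hp, SimpleGraph.dist_comm]
  simpa only [Walk.edges_reverse, List.mem_reverse] using h.2 p.reverse hrev

theorem Monitors.of_separates (h : Monitors G x u e) (hsep : Separates G u x y) :
    Monitors G x y e := by
  classical
  refine ⟨?_, fun p hp => ?_⟩
  · rintro rfl
    exact h.1 (separates_self_iff.1 hsep)
  · have hu : u ∈ p.support := hsep p
    have hshort : IsShortest G (p.takeUntil u hu) :=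
      length_eq_dist_of_subwalk hp (p.isSubwalk_takeUntil hu)
    exact p.edges_takeUntil_subset_edges hu (h.2 _ hshort)

theorem IsMEGSet.exists_monitors_of_monitors_cut_vertex (hconn : G.Preconnected)
    (hcut : ¬ (G.induce {v : V | v ≠ u}).Connected) (hS : IsMEGSet G S) (h : Monitors G x u e) :
    ∃ s ∈ S \ {u}, Monitors G x s e := by
  have : Nontrivial V := ⟨x, u, h.1⟩
  obtain ⟨z, hzu, hxz⟩ := exists_separates_of_not_connected_induce hcut h.1
  obtain ⟨s, hs, hxs⟩ := (hS.isGeodeticSet hconn).exists_mem_separates hzu hxz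
  exact ⟨s, hs, h.of_separates hxs⟩

theorem IsMEGSet.sdiff_cut_vertex (hconn : G.Preconnected)
    (hcut : ¬ (G.induce {v : V | v ≠ u}).Connected) (hS : IsMEGSet G S) :
    IsMEGSet G (S \ {u}) := by
  intro e he
  obtain ⟨x, hx, y, hy, hxy⟩ := hS e he
  rcases eq_or_ne y u with rfl | hyu
  · exact ⟨x, ⟨hx, hxy.1⟩, hS.exists_monitors_of_monitors_cut_vertex hconn hcut hxy⟩
  rcases eq_or_ne x u with rfl | hxu
  · exact ⟨y, ⟨hy, hyu⟩, hS.exists_monitors_of_monitors_cut_vertex hconn hcut hxy.symm⟩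
  · exact ⟨x, ⟨hx, hxu⟩, y, ⟨hy, hyu⟩, hxy⟩

theorem cut_vertex_not_in_minimal_meg_general (hconn : G.Connected)
    (hcut : ¬ (G.induce {v : V | v ≠ u}).Connected) (hS : IsMEGSet G S)
    (hmin : ∀ T : Set V, T ⊂ S → ¬ IsMEGSet G T) : u ∉ S :=
  fun hu => hmin (S \ {u}) (Set.sdiff_singleton_ssubset.2 hu)
    (hS.sdiff_cut_vertex hconn.preconnected hcut)

end

/-- A cut vertex of a connected graph does not belong to any
inclusion-minimal monitoring edge-geodetic set. -/
theorem cut_vertex_not_in_minimal_meg {V : Type*} [Fintype V]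
    (G : SimpleGraph V) (hconn : G.Connected) (u : V)
    (hcut : ¬ (G.induce {v : V | v ≠ u}).Connected)
    (S : Set V) (hS : IsMEGSet G S)
    (hmin : ∀ T : Set V, T ⊂ S → ¬ IsMEGSet G T) :
    u ∉ S :=
  cut_vertex_not_in_minimal_meg_general hconn hcut hS hmin
end

section
/- In a finite simple connected graph G with at least one edge, every simplicial vertex belongs to every edge-geodetic set of G, and hence to every monitoring edge-geodetic set of G. -/
/-!
A simplicial vertex `v` is never an interior vertex of a shortest path: the two neighbours of `v` on
the path would be at distance two, although any two neighbours of `v` are equal or adjacent. Hence a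
shortest path using an edge at `v` has `v` as an endpoint. In a connected graph every pair of
vertices is joined by a shortest path, so monitoring an edge is stronger than covering it.
-/

open SimpleGraph

variable {V : Type*}

/-- A simplicial vertex: its neighbourhood is a clique, so it is never an interior vertex of a
shortest path. Isolated vertices are simplicial under this definition. -/
def IsSimplicial (G : SimpleGraph V) (v : V) : Prop :=
  G.IsClique (G.neighborSet v)

section

variable {G : SimpleGraph V} {S : Set V} {a b v : V}

theorem IsSimplicial.dist_le_one_of_adj {x y : V} (hv : IsSimplicial G v)
    (hx : G.Adj v x) (hy : G.Adj v y) : G.dist x y ≤ 1 := by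
  obtain rfl | hne := eq_or_ne x y
  · simp
  · exact (dist_eq_one_iff_adj.mpr (hv hx hy hne)).le

theorem exists_isSubwalk_cons_cons_nil_of_mem_support {p : G.Walk a b} (hv : v ∈ p.support)
    (hva : v ≠ a) (hvb : v ≠ b) :
    ∃ (x y : V) (hx : G.Adj x v) (hy : G.Adj v y),
      (Walk.cons hx (Walk.cons hy Walk.nil)).IsSubwalk p := by
  obtain ⟨q, r, rfl⟩ := Walk.mem_support_iff_exists_append.mp hv
  cases q using Walk.concatRec with
  | Hnil => exact absurd rfl hva
  | Hconcat q hx =>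
    cases r with
    | nil => exact absurd rfl hvb
    | cons hy r => exact ⟨_, _, hx, hy, q, r, by simp [Walk.concat_append, ← Walk.append_assoc]⟩

theorem IsSimplicial.eq_or_eq_of_mem_support (hv : IsSimplicial G v) {p : G.Walk a b}
    (hp : IsShortest G p) (hmem : v ∈ p.support) : v = a ∨ v = b := by
  by_contra! hne
  obtain ⟨x, y, hx, hy, hsub⟩ := exists_isSubwalk_cons_cons_nil_of_mem_support hmem hne.1 hne.2
  have hdist : 2 = G.dist x y := length_eq_dist_of_subwalk hp hsub
  have hle : G.dist x y ≤ 1 := hv.dist_le_one_of_adj hx.symm hy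
  omega

theorem IsSimplicial.mem_of_isEdgeGeodeticSet (hv : IsSimplicial G v) (hsupp : v ∈ G.support)
    (hS : IsEdgeGeodeticSet G S) : v ∈ S := by
  obtain ⟨w, hw⟩ := G.mem_support.mp hsupp
  obtain ⟨a, ha, b, hb, -, p, hp, hmem⟩ := hS s(v, w) hw
  obtain rfl | rfl := hv.eq_or_eq_of_mem_support hp (p.fst_mem_support_of_mem_edges hmem)
  · exact ha
  · exact hb

theorem IsMEGSet.isEdgeGeodeticSet (hS : IsMEGSet G S) (hG : G.Preconnected) :
    IsEdgeGeodeticSet G S := by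
  intro e he
  obtain ⟨a, ha, b, hb, hab, hmon⟩ := hS e he
  obtain ⟨p, hp⟩ := (hG a b).exists_walk_length_eq_dist
  exact ⟨a, ha, b, hb, hab, p, hp, hmon p hp⟩

theorem mem_support_of_preconnected_of_edgeSet_nonempty (hG : G.Preconnected)
    (hne : G.edgeSet.Nonempty) (v : V) : v ∈ G.support := by
  have : Nontrivial (SimpleGraph V) := ⟨G, ⊥, edgeSet_nonempty.mp hne⟩
  have : Nontrivial V := SimpleGraph.nontrivial_iff.mp this
  exact hG.exists_adj_of_nontrivial v

theorem simplicial_mem_every_eg_and_meg_general (hG : G.Preconnected) (hne : G.edgeSet.Nonempty)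
    (hv : IsSimplicial G v) :
    (∀ S : Set V, IsEdgeGeodeticSet G S → v ∈ S) ∧ (∀ S : Set V, IsMEGSet G S → v ∈ S) := by
  have hsupp : v ∈ G.support := mem_support_of_preconnected_of_edgeSet_nonempty hG hne v
  exact ⟨fun _ hS ↦ hv.mem_of_isEdgeGeodeticSet hsupp hS,
    fun _ hS ↦ hv.mem_of_isEdgeGeodeticSet hsupp (hS.isEdgeGeodeticSet hG)⟩

end

/-- In a connected graph with at least one edge, every simplicial vertex
belongs to every edge-geodetic set, and hence to every monitoring edge-geodetic set. -/
theorem simplicial_mem_every_eg_and_meg {V : Type*} [Fintype V]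
    (G : SimpleGraph V) (hconn : G.Connected) (hne : G.edgeSet.Nonempty) (v : V)
    (hsimp : ∀ x y : V, G.Adj v x → G.Adj v y → x ≠ y → G.Adj x y) :
    (∀ S : Set V, IsEdgeGeodeticSet G S → v ∈ S) ∧
    (∀ S : Set V, IsMEGSet G S → v ∈ S) :=
  simplicial_mem_every_eg_and_meg_general hconn.preconnected hne
    fun x hx y hy ↦ hsimp x y hx hy
end

section
/- Let G be a finite simple connected graph and let u, v be distinct vertices of degree at least one that are open twins (N(u) = N(v)) or closed twins (N[u] = N[v]). Then both u and v belong to every monitoring edge-geodetic set of G. -/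
/-!
Suppose `N(u) ⊆ N[v]`, as is the case for open and for closed twins. Moving `u` to `v` and fixing
every other vertex sends each edge to an edge or to a single vertex, so it carries a shortest path
between two vertices other than `u` to a shortest path between the same two vertices avoiding `u`.
Hence an edge at `u` can only be monitored by a pair containing `u`.
-/

open SimpleGraph

variable {V : Type*}

section Twins

variable {W : Type*} {G : SimpleGraph V} {H : SimpleGraph W} {f : V → W} {u v w x y : V}
  {S : Set V}

/-- A weak homomorphism of graphs: adjacent vertices have adjacent or equal images. Unlike
`G →g H`, it may contract edges and thereby shorten walks. -/
def IsWeakHom (G : SimpleGraph V) (H : SimpleGraph W) (f : V → W) : Prop :=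
  ∀ ⦃a b : V⦄, G.Adj a b → f a = f b ∨ H.Adj (f a) (f b)

theorem IsWeakHom.exists_walk_length_le (hf : IsWeakHom G H f) (p : G.Walk x y) :
    ∃ q : H.Walk (f x) (f y), q.length ≤ p.length ∧ q.support ⊆ p.support.map f := by
  induction p with
  | nil => exact ⟨.nil, le_rfl, List.Subset.refl _⟩
  | @cons a b _ hab p ih =>
    obtain ⟨q, hlength, hsupport⟩ := ih
    rw [Walk.length_cons, Walk.support_cons, List.map_cons]
    rcases hf hab with heq | hadj
    · rw [heq]
      exact ⟨q, Nat.le_succ_of_le hlength, List.subset_cons_of_subset _ hsupport⟩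
    · exact ⟨.cons hadj q, Nat.succ_le_succ hlength, List.cons_subset_cons _ hsupport⟩

/-- The vicinal preorder `N(u) ⊆ N[v]` on vertices, a one-sided common weakening of being open twins
and being closed twins. -/
def VicinalLE (G : SimpleGraph V) (u v : V) : Prop :=
  G.neighborSet u ⊆ insert v (G.neighborSet v)

theorem vicinalLE_of_twins
    (htwin : G.neighborSet u = G.neighborSet v ∨
      insert u (G.neighborSet u) = insert v (G.neighborSet v)) : VicinalLE G u v := by
  rcases htwin with hopen | hclosed
  · exact hopen.subset.trans (Set.subset_insert _ _)
  · exact (Set.subset_insert _ _).trans hclosed.subset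

namespace VicinalLE

theorem isWeakHom_update [DecidableEq V] (h : VicinalLE G u v) :
    IsWeakHom G G (Function.update id u v) := by
  intro a b hab
  by_cases ha : a = u
  · subst ha
    rw [Function.update_self, Function.update_of_ne hab.ne']
    exact (h hab).imp_left Eq.symm
  by_cases hb : b = u
  · subst hb
    rw [Function.update_self, Function.update_of_ne ha]
    exact (h hab.symm).imp_right Adj.symm
  · rw [Function.update_of_ne ha, Function.update_of_ne hb]
    exact .inr hab

theorem exists_isShortest_notMem_support (h : VicinalLE G u v) (huv : u ≠ v)
    (hxy : G.Reachable x y) (hx : x ≠ u) (hy : y ≠ u) :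
    ∃ q : G.Walk x y, IsShortest G q ∧ u ∉ q.support := by
  classical
  obtain ⟨p, hp⟩ := hxy.exists_walk_length_eq_dist
  have hwalk := h.isWeakHom_update.exists_walk_length_le p
  rw [Function.update_of_ne hx, Function.update_of_ne hy] at hwalk
  obtain ⟨q, hlength, hsupport⟩ := hwalk
  refine ⟨q, (hlength.trans_eq hp).antisymm (dist_le q), fun hu ↦ ?_⟩
  obtain ⟨z, -, hz⟩ := List.mem_map.mp (hsupport hu)
  by_cases hzu : z = u
  · rw [hzu, Function.update_self] at hz
    exact huv hz.symm
  · rw [Function.update_of_ne hzu] at hz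
    exact hzu hz

theorem eq_or_eq_of_monitors (h : VicinalLE G u v) (huv : u ≠ v) (hxy : G.Reachable x y)
    (hmon : Monitors G x y s(u, w)) : x = u ∨ y = u := by
  by_contra! hne
  obtain ⟨q, hq, hu⟩ := h.exists_isShortest_notMem_support huv hxy hne.1 hne.2
  exact hu (q.fst_mem_support_of_mem_edges (hmon.2 q hq))

end VicinalLE

theorem twins_mem_every_meg_general (hconn : G.Connected) (huv : u ≠ v) (h : VicinalLE G u v)
    (hS : IsMEGSet G S) : u ∈ S := by
  obtain ⟨w, huw⟩ := Reachable.nonempty_neighborSet_left huv (hconn u v)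
  obtain ⟨x, hx, y, hy, hmon⟩ := hS s(u, w) huw
  rcases h.eq_or_eq_of_monitors huv (hconn x y) hmon with rfl | rfl
  · exact hx
  · exact hy

end Twins

/-- Every pair of (open or closed) twins of degree at least one belongs
to every monitoring edge-geodetic set. -/
theorem twins_mem_every_meg {V : Type*} [Fintype V]
    (G : SimpleGraph V) (hconn : G.Connected) (u v : V) (huv : u ≠ v)
    (hdu : (G.neighborSet u).Nonempty) (hdv : (G.neighborSet v).Nonempty)
    (htwin : G.neighborSet u = G.neighborSet v ∨
      insert u (G.neighborSet u) = insert v (G.neighborSet v)) :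
    ∀ S : Set V, IsMEGSet G S → u ∈ S ∧ v ∈ S := by
  exact fun S hS ↦ ⟨twins_mem_every_meg_general hconn huv (vicinalLE_of_twins htwin) hS,
    twins_mem_every_meg_general hconn huv.symm (vicinalLE_of_twins (htwin.imp .symm .symm)) hS⟩
end

section
/- Let G be a finite simple connected graph and S ⊆ V(G). Then S is a monitoring edge-geodetic set of G if and only if for every assignment f that chooses, for each unordered pair of distinct vertices of S, one shortest path between them, the union of the chosen paths covers every edge of G (that is, S together with the assignment f is a strong edge-geodetic set for every choice of f). -/
open SimpleGraph

variable {V : Type*}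

theorem not_monitors_iff {G : SimpleGraph V} {u v : V} {e : Sym2 V} (huv : u ≠ v) :
    ¬Monitors G u v e ↔ ∃ p : G.Walk u v, IsShortest G p ∧ e ∉ p.edges := by
  simp only [Monitors, huv, ne_eq, not_false_eq_true, true_and, not_forall, exists_prop]

theorem exists_monitors_iff_forall_assignment (G : SimpleGraph V) (S : Set V) (e : Sym2 V) :
    (∃ u ∈ S, ∃ v ∈ S, Monitors G u v e) ↔
      ∀ f : ∀ u v : V, u ∈ S → v ∈ S → u ≠ v → G.Walk u v,
        (∀ u v hu hv huv, IsShortest G (f u v hu hv huv)) →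
        ∃ u v, ∃ hu : u ∈ S, ∃ hv : v ∈ S, ∃ huv : u ≠ v, e ∈ (f u v hu hv huv).edges := by
  constructor
  · rintro ⟨u, hu, v, hv, huv, mem_edges⟩ f f_shortest
    exact ⟨u, v, hu, hv, huv, mem_edges _ (f_shortest u v hu hv huv)⟩
  · intro every_assignment_covers
    by_contra! not_monitored
    have exists_avoiding (u v : V) (hu : u ∈ S) (hv : v ∈ S) (huv : u ≠ v) :
        ∃ p : G.Walk u v, IsShortest G p ∧ e ∉ p.edges :=
      (not_monitors_iff huv).mp (not_monitored u hu v hv)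
    choose f f_shortest f_avoids using exists_avoiding
    obtain ⟨u, v, hu, hv, huv, covered⟩ := every_assignment_covers f f_shortest
    exact f_avoids u v hu hv huv covered

/-- If `S` meets two components of `G`, both sides hold vacuously: a pair joined by no walk
monitors every edge, and there is no assignment `f`. -/
theorem meg_iff_every_assignment_strong_general (G : SimpleGraph V) (S : Set V) :
    IsMEGSet G S ↔
      ∀ f : ∀ u v : V, u ∈ S → v ∈ S → u ≠ v → G.Walk u v,
        (∀ u v hu hv huv, IsShortest G (f u v hu hv huv)) →
        ∀ e ∈ G.edgeSet, ∃ u v, ∃ hu : u ∈ S, ∃ hv : v ∈ S, ∃ huv : u ≠ v,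
          e ∈ (f u v hu hv huv).edges := by
  simp only [IsMEGSet, exists_monitors_iff_forall_assignment]
  exact ⟨fun h f hf e he => h e he f hf, fun h e he f hf => h f hf e he⟩

/-- `S` is a monitoring edge-geodetic set iff for every assignment of one
shortest path to each pair of distinct vertices of `S`, the chosen paths cover every
edge of `G`. -/
theorem meg_iff_every_assignment_strong {V : Type*} [Fintype V]
    (G : SimpleGraph V) (hconn : G.Connected) (S : Set V) :
    IsMEGSet G S ↔
      ∀ f : ∀ u v : V, u ∈ S → v ∈ S → u ≠ v → G.Walk u v,
        (∀ u v hu hv huv, IsShortest G (f u v hu hv huv)) →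
        ∀ e ∈ G.edgeSet, ∃ u v, ∃ hu : u ∈ S, ∃ hv : v ∈ S, ∃ huv : u ≠ v,
          e ∈ (f u v hu hv huv).edges :=
  meg_iff_every_assignment_strong_general G S
end
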